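/- Let m ≥ 1 be an integer and s > 0. Then lim_{ρ→∞} -ln((1/(m-1)!) ∫₀^∞ (1+ρx)^{-s} x^{m-1} e^{-x} dx)/ln ρ = min(s, m). Consequently, for the buffered SIMO Rayleigh channel with m receive antennas, bandwidth ratio η > 0 and normalized delay τₙ > 0 (so s = η/τₙ), the distortion SNR exponent is min(η, m·τₙ). (This is the SIMO/MISO case of Theorem 4: below the corner point η = τₙ m the system is degrees-of-freedom limited, above it diversity limited.) -/

import Mathlib

open MeasureTheory Real Filter Set

/-!
Since `(1 + ρx)^(-s) ≤ (ρx)^(-t)` for `0 ≤ t ≤ s`, a finite moment `E[X^(-t)]` makes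
`E[(1 + ρX)^(-s)]` decay at least like `ρ^(-t)`. Conversely, restricting the expectation to the
event `X ≤ ε` bounds it below by `(1 + ρε)^(-s) P(X ≤ ε)`: a fixed `ε` gives decay at most like
`ρ^(-s)`, and `ε = 1/ρ` gives at most the decay of the outage probability `P(X ≤ 1/ρ)`. A gamma
variable of shape `a` has `E[X^(-t)] < ∞` for all `t < a` and `P(X ≤ ε)` of order `ε^a`, so the
two bounds meet at `min s a`. SIMO Rayleigh fading is the case of shape `m` and rate `1`.
-/

open Asymptotics ProbabilityTheory Topology

/-- `F` has SNR exponent `d` if `F ρ` decays like `ρ ^ (-d)` on the logarithmic scale as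
`ρ → ∞`. -/
def HasSNRExponent (F : ℝ → ℝ) (d : ℝ) : Prop :=
  Tendsto (fun ρ => -log (F ρ) / log ρ) atTop (𝓝 d)

/-- The bound `D(ρ)` on the distortion of a buffered transmission at SNR `ρ`, with bandwidth
ratio `η` and normalized delay `τ`, over a fading channel whose power gain has law `μ`. -/
noncomputable def bufferedDistortion (μ : Measure ℝ) (η τ ρ : ℝ) : ℝ :=
  (∫ x, (1 + ρ * x) ^ (-(η / τ)) ∂μ) ^ τ

section Exponent

variable {F : ℝ → ℝ} {d : ℝ}

theorem hasSNRExponent_const_mul_rpow_neg {K : ℝ} (hK : K ≠ 0) (d : ℝ) :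
    HasSNRExponent (fun ρ => K * ρ ^ (-d)) d := by
  have h : Tendsto (fun ρ => d - log K / log ρ) atTop (𝓝 d) := by
    simpa using tendsto_const_nhds.sub (tendsto_log_atTop.const_div_atTop (log K))
  refine h.congr' ?_
  filter_upwards [eventually_gt_atTop 1] with ρ hρ
  have hρ0 : 0 < ρ := one_pos.trans hρ
  have hlog : log ρ ≠ 0 := (log_pos hρ).ne'
  rw [log_mul hK (rpow_pos_of_pos hρ0 _).ne', log_rpow hρ0]
  field_simp
  ring

theorem neg_log_div_log_le_of_abs_le {x y ρ : ℝ} (hρ : 1 ≤ ρ) (hx : x ≠ 0) (hxy : |x| ≤ |y|) :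
    -log y / log ρ ≤ -log x / log ρ := by
  have hlog : log x ≤ log y := by
    simpa only [log_abs] using log_le_log (abs_pos.2 hx) hxy
  exact div_le_div_of_nonneg_right (neg_le_neg hlog) (log_nonneg hρ)

theorem HasSNRExponent.of_isBigO (hlower : (fun ρ => ρ ^ (-d)) =O[atTop] F)
    (hupper : ∀ᶠ t in 𝓝[<] d, F =O[atTop] fun ρ => ρ ^ (-t)) : HasSNRExponent F d := by
  refine tendsto_order.2 ⟨fun l hl => ?_, fun u hu => ?_⟩
  · have hF : ∀ᶠ ρ in atTop, F ρ ≠ 0 := by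
      filter_upwards [hlower.eq_zero_imp, eventually_gt_atTop 0] with ρ hzero hρ hFρ
      exact (rpow_pos_of_pos hρ _).ne' (hzero hFρ)
    obtain ⟨t, hFt, hlt, -⟩ := (hupper.and (Ioo_mem_nhdsLT hl)).exists
    obtain ⟨K, hK, hbound⟩ := hFt.exists_pos
    filter_upwards [(hasSNRExponent_const_mul_rpow_neg hK.ne' t).eventually_const_lt hlt,
      hbound.bound, hF, eventually_ge_atTop 1] with ρ hlK hFK hFρ hρ
    refine hlK.trans_le (neg_log_div_log_le_of_abs_le hρ hFρ ?_)
    simpa [abs_mul, abs_of_pos hK] using hFK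
  · obtain ⟨K, hK, hbound⟩ := hlower.exists_pos
    filter_upwards [(hasSNRExponent_const_mul_rpow_neg (inv_ne_zero hK.ne') d).eventually_lt_const
      hu, hbound.bound, eventually_ge_atTop 1] with ρ hKu hKF hρ
    have hne : K⁻¹ * ρ ^ (-d) ≠ 0 := by positivity
    refine (neg_log_div_log_le_of_abs_le hρ hne ?_).trans_lt hKu
    rw [abs_mul, abs_of_pos (inv_pos.2 hK)]
    exact (inv_mul_le_iff₀ hK).2 hKF

theorem HasSNRExponent.rpow (h : HasSNRExponent F d) (hF : ∀ᶠ ρ in atTop, 0 < F ρ) (τ : ℝ) :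
    HasSNRExponent (fun ρ => F ρ ^ τ) (d * τ) := by
  refine (h.mul_const τ).congr' ?_
  filter_upwards [hF] with ρ hFρ
  rw [log_rpow hFρ]
  ring

end Exponent

section Distribution

variable {μ : Measure ℝ} {a s t ρ ε : ℝ}

theorem one_add_mul_rpow_neg_le {x : ℝ} (hρ : 0 < ρ) (hx : 0 < x) (ht : 0 ≤ t) (hts : t ≤ s) :
    (1 + ρ * x) ^ (-s) ≤ ρ ^ (-t) * x ^ (-t) := by
  have hρx : 0 < ρ * x := mul_pos hρ hx
  calc (1 + ρ * x) ^ (-s) ≤ (1 + ρ * x) ^ (-t) :=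
        rpow_le_rpow_of_exponent_le (by linarith) (by linarith)
    _ ≤ (ρ * x) ^ (-t) := rpow_le_rpow_of_nonpos hρx (by linarith) (by linarith)
    _ = ρ ^ (-t) * x ^ (-t) := mul_rpow hρ.le hx.le

theorem integral_one_add_mul_rpow_neg_le (hμ : ∀ᵐ x ∂μ, 0 < x)
    (hmoment : Integrable (fun x => x ^ (-t)) μ) (hρ : 0 < ρ) (ht : 0 ≤ t) (hts : t ≤ s) :
    ∫ x, (1 + ρ * x) ^ (-s) ∂μ ≤ ρ ^ (-t) * ∫ x, x ^ (-t) ∂μ := by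
  rw [← integral_const_mul]
  refine integral_mono_of_nonneg ?_ (hmoment.const_mul _) ?_
  · filter_upwards [hμ] with x hx using by positivity
  · filter_upwards [hμ] with x hx using one_add_mul_rpow_neg_le hρ hx ht hts

theorem isBigO_integral_one_add_mul_rpow_neg (hμ : ∀ᵐ x ∂μ, 0 < x)
    (hmoment : Integrable (fun x => x ^ (-t)) μ) (ht : 0 ≤ t) (hts : t ≤ s) :
    (fun ρ => ∫ x, (1 + ρ * x) ^ (-s) ∂μ) =O[atTop] fun ρ => ρ ^ (-t) := by
  refine .of_bound (∫ x, x ^ (-t) ∂μ) ?_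
  filter_upwards [eventually_gt_atTop 0] with ρ hρ
  have hnonneg : 0 ≤ ∫ x, (1 + ρ * x) ^ (-s) ∂μ :=
    integral_nonneg_of_ae (by filter_upwards [hμ] with x hx using by positivity)
  rw [norm_of_nonneg hnonneg, norm_of_nonneg (by positivity), mul_comm]
  exact integral_one_add_mul_rpow_neg_le hμ hmoment hρ ht hts

theorem exists_measure_Iic_ne_zero
    (houtage : (fun ρ => ρ ^ (-a)) =O[atTop] fun ρ => μ.real (Iic ρ⁻¹)) :
    ∃ ε, 0 ≤ ε ∧ μ (Iic ε) ≠ 0 := by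
  obtain ⟨ρ, hzero, hρ⟩ := (houtage.eq_zero_imp.and (eventually_gt_atTop 0)).exists
  refine ⟨ρ⁻¹, by positivity, fun hnull => (rpow_pos_of_pos hρ (-a)).ne' (hzero ?_)⟩
  simp [measureReal_def, hnull]

variable [IsFiniteMeasure μ]

theorem integrable_one_add_mul_rpow_neg (hμ : ∀ᵐ x ∂μ, 0 ≤ x) (hρ : 0 ≤ ρ) (hs : 0 ≤ s) :
    Integrable (fun x => (1 + ρ * x) ^ (-s)) μ := by
  have hmeas : Measurable fun x => (1 + ρ * x) ^ (-s) :=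
    (measurable_const.add (measurable_id.const_mul ρ)).pow_const _
  refine .of_bound hmeas.aestronglyMeasurable 1 ?_
  filter_upwards [hμ] with x hx
  rw [norm_of_nonneg (by positivity)]
  exact rpow_le_one_of_one_le_of_nonpos (by nlinarith) (by linarith)

theorem rpow_neg_mul_measureReal_Iic_le_integral (hμ : ∀ᵐ x ∂μ, 0 ≤ x) (hρ : 0 ≤ ρ)
    (hs : 0 ≤ s) :
    (1 + ρ * ε) ^ (-s) * μ.real (Iic ε) ≤ ∫ x, (1 + ρ * x) ^ (-s) ∂μ := by
  have hint := integrable_one_add_mul_rpow_neg hμ hρ hs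
  calc (1 + ρ * ε) ^ (-s) * μ.real (Iic ε) = ∫ _ in Iic ε, (1 + ρ * ε) ^ (-s) ∂μ := by
        rw [setIntegral_const, smul_eq_mul, mul_comm]
    _ ≤ ∫ x in Iic ε, (1 + ρ * x) ^ (-s) ∂μ := by
        refine integral_mono_ae (integrable_const _) hint.integrableOn ?_
        filter_upwards [ae_restrict_of_ae hμ, ae_restrict_mem measurableSet_Iic] with x hx hxε
        exact rpow_le_rpow_of_nonpos (by positivity) (by gcongr; exact hxε) (by linarith)
    _ ≤ ∫ x, (1 + ρ * x) ^ (-s) ∂μ := by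
        refine setIntegral_le_integral hint ?_
        filter_upwards [hμ] with x hx using by positivity

theorem rpow_neg_isBigO_integral_one_add_mul (hμ : ∀ᵐ x ∂μ, 0 ≤ x) (hε : 0 ≤ ε)
    (hεμ : μ (Iic ε) ≠ 0) (hs : 0 ≤ s) :
    (fun ρ => ρ ^ (-s)) =O[atTop] fun ρ => ∫ x, (1 + ρ * x) ^ (-s) ∂μ := by
  have hmass : 0 < μ.real (Iic ε) := ENNReal.toReal_pos hεμ (measure_ne_top _ _)
  refine .of_bound (((1 + ε) ^ (-s) * μ.real (Iic ε))⁻¹) ?_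
  filter_upwards [eventually_ge_atTop 1] with ρ hρ
  have hρ0 : 0 < ρ := by linarith
  rw [norm_of_nonneg (by positivity), le_inv_mul_iff₀ (by positivity)]
  refine le_trans ?_ (le_abs_self _)
  calc (1 + ε) ^ (-s) * μ.real (Iic ε) * ρ ^ (-s)
      = (ρ * (1 + ε)) ^ (-s) * μ.real (Iic ε) := by
        rw [mul_rpow hρ0.le (by positivity)]; ring
    _ ≤ (1 + ρ * ε) ^ (-s) * μ.real (Iic ε) :=
        mul_le_mul_of_nonneg_right
          (rpow_le_rpow_of_nonpos (by positivity) (by linarith) (by linarith)) hmass.le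
    _ ≤ ∫ x, (1 + ρ * x) ^ (-s) ∂μ := rpow_neg_mul_measureReal_Iic_le_integral hμ hρ0.le hs

theorem measureReal_Iic_inv_isBigO_integral (hμ : ∀ᵐ x ∂μ, 0 ≤ x) (hs : 0 ≤ s) :
    (fun ρ => μ.real (Iic ρ⁻¹)) =O[atTop] fun ρ => ∫ x, (1 + ρ * x) ^ (-s) ∂μ := by
  refine .of_bound (((2 : ℝ) ^ (-s))⁻¹) ?_
  filter_upwards [eventually_gt_atTop 0] with ρ hρ
  have hbound := rpow_neg_mul_measureReal_Iic_le_integral (ε := ρ⁻¹) hμ hρ.le hs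
  rw [mul_inv_cancel₀ hρ.ne', one_add_one_eq_two] at hbound
  rw [norm_of_nonneg measureReal_nonneg, le_inv_mul_iff₀ (by positivity)]
  exact hbound.trans (le_abs_self _)

theorem integral_one_add_mul_rpow_neg_pos (hμ : ∀ᵐ x ∂μ, 0 ≤ x) (hε : 0 ≤ ε)
    (hεμ : μ (Iic ε) ≠ 0) (hρ : 0 ≤ ρ) (hs : 0 ≤ s) :
    0 < ∫ x, (1 + ρ * x) ^ (-s) ∂μ := by
  have hmass : 0 < μ.real (Iic ε) := ENNReal.toReal_pos hεμ (measure_ne_top _ _)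
  exact lt_of_lt_of_le (by positivity) (rpow_neg_mul_measureReal_Iic_le_integral hμ hρ hs)

theorem hasSNRExponent_integral_one_add_mul_rpow_neg (hμ : ∀ᵐ x ∂μ, 0 < x)
    (houtage : (fun ρ => ρ ^ (-a)) =O[atTop] fun ρ => μ.real (Iic ρ⁻¹))
    (hmoment : ∀ t ∈ Ioo 0 a, Integrable (fun x => x ^ (-t)) μ) (ha : 0 < a) (hs : 0 < s) :
    HasSNRExponent (fun ρ => ∫ x, (1 + ρ * x) ^ (-s) ∂μ) (min s a) := by
  have hμ0 : ∀ᵐ x ∂μ, 0 ≤ x := hμ.mono fun _ => le_of_lt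
  obtain ⟨ε, hε, hεμ⟩ := exists_measure_Iic_ne_zero houtage
  refine .of_isBigO ?_ ?_
  · rcases min_choice s a with h | h <;> rw [h]
    · exact rpow_neg_isBigO_integral_one_add_mul hμ0 hε hεμ hs.le
    · exact houtage.trans (measureReal_Iic_inv_isBigO_integral hμ0 hs.le)
  · filter_upwards [Ioo_mem_nhdsLT (lt_min hs ha)] with t ht
    exact isBigO_integral_one_add_mul_rpow_neg hμ
      (hmoment t ⟨ht.1, ht.2.trans_le (min_le_right s a)⟩) ht.1.le
      (ht.2.le.trans (min_le_left s a))

theorem hasSNRExponent_bufferedDistortion {η τ : ℝ} (hμ : ∀ᵐ x ∂μ, 0 < x)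
    (houtage : (fun ρ => ρ ^ (-a)) =O[atTop] fun ρ => μ.real (Iic ρ⁻¹))
    (hmoment : ∀ t ∈ Ioo 0 a, Integrable (fun x => x ^ (-t)) μ) (ha : 0 < a) (hη : 0 < η)
    (hτ : 0 < τ) :
    HasSNRExponent (bufferedDistortion μ η τ) (min η (a * τ)) := by
  have hs : 0 < η / τ := div_pos hη hτ
  obtain ⟨ε, hε, hεμ⟩ := exists_measure_Iic_ne_zero houtage
  have hpos : ∀ᶠ ρ in atTop, 0 < ∫ x, (1 + ρ * x) ^ (-(η / τ)) ∂μ := by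
    filter_upwards [eventually_ge_atTop 0] with ρ hρ
    exact integral_one_add_mul_rpow_neg_pos (hμ.mono fun _ => le_of_lt) hε hεμ hρ hs.le
  have hexp :=
    (hasSNRExponent_integral_one_add_mul_rpow_neg hμ houtage hmoment ha hs).rpow hpos τ
  rwa [min_mul_of_nonneg _ _ hτ.le, div_mul_cancel₀ _ hτ.ne'] at hexp

end Distribution

section Gamma

variable {a r t ε : ℝ}

theorem gammaMeasure_eq_withDensity_restrict_Ioi (a r : ℝ) :
    gammaMeasure a r = (volume.restrict (Ioi 0)).withDensity (gammaPDF a r) := by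
  rw [Measure.restrict_congr_set Ioi_ae_eq_Ici, ← withDensity_indicator measurableSet_Ici,
    gammaMeasure]
  congr 1
  refine (indicator_eq_self.2 fun x hx => ?_).symm
  by_contra hneg
  exact hx (gammaPDF_of_neg (not_le.1 hneg))

theorem gammaMeasure_ae_pos (a r : ℝ) : ∀ᵐ x ∂gammaMeasure a r, 0 < x := by
  rw [gammaMeasure_eq_withDensity_restrict_Ioi]
  exact (withDensity_absolutelyContinuous _ _).ae_le (ae_restrict_mem measurableSet_Ioi)

theorem measurable_gammaPDF (a r : ℝ) : Measurable (gammaPDF a r) :=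
  (measurable_gammaPDFReal a r).ennreal_ofReal

theorem toReal_gammaPDF (ha : 0 < a) (hr : 0 < r) (x : ℝ) :
    (gammaPDF a r x).toReal = gammaPDFReal a r x :=
  ENNReal.toReal_ofReal (gammaPDFReal_nonneg ha hr x)

theorem integrable_gammaMeasure_iff (ha : 0 < a) (hr : 0 < r) {f : ℝ → ℝ} :
    Integrable f (gammaMeasure a r) ↔
      IntegrableOn (fun x => gammaPDFReal a r x * f x) (Ioi 0) := by
  rw [gammaMeasure_eq_withDensity_restrict_Ioi, integrable_withDensity_iff_integrable_smul'
    (measurable_gammaPDF a r) (ae_of_all _ fun _ => ENNReal.ofReal_lt_top)]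
  simp only [toReal_gammaPDF ha hr, smul_eq_mul, IntegrableOn]

theorem integral_gammaMeasure (ha : 0 < a) (hr : 0 < r) (f : ℝ → ℝ) :
    ∫ x, f x ∂gammaMeasure a r = ∫ x in Ioi 0, gammaPDFReal a r x * f x := by
  rw [gammaMeasure_eq_withDensity_restrict_Ioi, integral_withDensity_eq_integral_toReal_smul
    (measurable_gammaPDF a r) (ae_of_all _ fun _ => ENNReal.ofReal_lt_top)]
  simp only [toReal_gammaPDF ha hr, smul_eq_mul]

theorem integrable_gammaPDFReal (ha : 0 < a) (hr : 0 < r) : Integrable (gammaPDFReal a r) := by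
  refine ⟨by fun_prop, ?_⟩
  rw [hasFiniteIntegral_iff_ofReal (ae_of_all _ (gammaPDFReal_nonneg ha hr))]
  exact (lintegral_gammaPDF_eq_one ha hr).trans_lt ENNReal.one_lt_top

theorem integrable_rpow_neg_gammaMeasure (ha : 0 < a) (hr : 0 < r) (ht : t < a) :
    Integrable (fun x => x ^ (-t)) (gammaMeasure a r) := by
  rw [integrable_gammaMeasure_iff ha hr]
  have hint : IntegrableOn (fun x => x ^ (a - t - 1) * exp (-r * x ^ (1 : ℝ))) (Ioi 0) :=
    integrableOn_rpow_mul_exp_neg_mul_rpow (by linarith) one_pos hr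
  refine IntegrableOn.congr_fun (hint.const_mul (r ^ a / Gamma a)) (fun x (hx : 0 < x) => ?_)
    measurableSet_Ioi
  have hpow : x ^ (a - t - 1) = x ^ (a - 1) * x ^ (-t) := by
    rw [← rpow_add hx]; ring_nf
  simp only [gammaPDFReal, if_pos hx.le, hpow, rpow_one, neg_mul]
  ring

theorem le_measureReal_gammaMeasure_Iic (ha : 0 < a) (hr : 0 < r) (hε : 0 ≤ ε) :
    r ^ a * exp (-(r * ε)) / Gamma (a + 1) * ε ^ a ≤ (gammaMeasure a r).real (Iic ε) := by
  have := isProbabilityMeasure_gammaMeasure ha hr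
  have hpdf := integrable_gammaPDFReal ha hr
  have hpow : ∫ x in Ioc 0 ε, x ^ (a - 1) = ε ^ a / a := by
    rw [← intervalIntegral.integral_of_le hε, integral_rpow (.inl (by linarith)), sub_add_cancel,
      zero_rpow ha.ne', sub_zero]
  calc r ^ a * exp (-(r * ε)) / Gamma (a + 1) * ε ^ a
      = ∫ x in Ioc 0 ε, r ^ a / Gamma a * exp (-(r * ε)) * x ^ (a - 1) := by
        rw [integral_const_mul, hpow, Gamma_add_one ha.ne']
        field_simp
    _ ≤ ∫ x in Ioc 0 ε, gammaPDFReal a r x := by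
        refine setIntegral_mono_on (.const_mul ?_ _) hpdf.integrableOn measurableSet_Ioc ?_
        · exact (intervalIntegrable_iff_integrableOn_Ioc_of_le hε).1
            (intervalIntegral.intervalIntegrable_rpow' (by linarith))
        · rintro x ⟨hx, hxε⟩
          rw [gammaPDFReal, if_pos hx.le, mul_right_comm]
          gcongr
    _ ≤ ∫ x in Iic ε, gammaPDFReal a r x :=
        setIntegral_mono_set hpdf.integrableOn (ae_of_all _ (gammaPDFReal_nonneg ha hr))
          (.of_forall Ioc_subset_Iic_self)
    _ = (gammaMeasure a r).real (Iic ε) := by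
        rw [← cdf_gammaMeasure_eq_integral ha hr, cdf_eq_real]

theorem rpow_neg_isBigO_measureReal_gammaMeasure_Iic_inv (ha : 0 < a) (hr : 0 < r) :
    (fun ρ => ρ ^ (-a)) =O[atTop] fun ρ => (gammaMeasure a r).real (Iic ρ⁻¹) := by
  refine .of_bound ((r ^ a * exp (-r) / Gamma (a + 1))⁻¹) ?_
  filter_upwards [eventually_ge_atTop 1] with ρ hρ
  have hρ0 : 0 < ρ := by linarith
  have hrρ : r * ρ⁻¹ ≤ r := mul_le_of_le_one_right hr.le (inv_le_one_of_one_le₀ hρ)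
  rw [norm_of_nonneg (by positivity), norm_of_nonneg measureReal_nonneg,
    le_inv_mul_iff₀ (by positivity), rpow_neg hρ0.le, ← inv_rpow hρ0.le]
  refine le_trans ?_ (le_measureReal_gammaMeasure_Iic ha hr (inv_nonneg.2 hρ0.le))
  gcongr

theorem bufferedDistortion_gammaMeasure_natCast_one {m : ℕ} (hm : 1 ≤ m) (η τ ρ : ℝ) :
    bufferedDistortion (gammaMeasure m 1) η τ ρ =
      ((1 / (Nat.factorial (m - 1) : ℝ)) *
        ∫ x in Ioi (0 : ℝ), (1 + ρ * x) ^ (-(η / τ)) * x ^ (m - 1) * exp (-x)) ^ τ := by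
  have hΓ : Gamma m = Nat.factorial (m - 1) := by
    simpa [Nat.cast_sub hm] using Gamma_nat_eq_factorial (m - 1)
  rw [bufferedDistortion, integral_gammaMeasure (by positivity) one_pos, ← integral_const_mul]
  congr 1
  refine setIntegral_congr_fun measurableSet_Ioi fun x (hx : 0 < x) => ?_
  have hpow : x ^ ((m : ℝ) - 1) = x ^ (m - 1) := by
    rw [← rpow_natCast, Nat.cast_sub hm, Nat.cast_one]
  simp only [gammaPDFReal, if_pos hx.le, hΓ, hpow, one_rpow, one_mul]
  ring

end Gamma

theorem simo_snr_exponent_general {a r η τ : ℝ} (ha : 0 < a) (hr : 0 < r) (hη : 0 < η)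
    (hτ : 0 < τ) :
    HasSNRExponent (bufferedDistortion (gammaMeasure a r) η τ) (min η (a * τ)) := by
  have := isProbabilityMeasure_gammaMeasure ha hr
  exact hasSNRExponent_bufferedDistortion (gammaMeasure_ae_pos a r)
    (rpow_neg_isBigO_measureReal_gammaMeasure_Iic_inv ha hr)
    (fun _ ht => integrable_rpow_neg_gammaMeasure ha hr ht.2) ha hη hτ

/-- **SIMO/MISO distortion SNR exponent.** For an integer `m ≥ 1` and `s > 0`,
`lim_{ρ→∞} -ln((1/(m-1)!) ∫₀^∞ (1+ρx)^{-s} x^{m-1} e^{-x} dx)/ln ρ = min(s,m)`;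
consequently, for bandwidth ratio `η > 0` and normalized delay `τₙ > 0`
(so `s = η/τₙ`), the buffered SIMO distortion SNR exponent is `min(η, m·τₙ)`. -/
theorem simo_snr_exponent (m : ℕ) (hm : 1 ≤ m) (s : ℝ) (hs : 0 < s)
    (η τ : ℝ) (hη : 0 < η) (hτ : 0 < τ) :
    Tendsto
      (fun ρ : ℝ =>
        -Real.log ((1 / (Nat.factorial (m - 1) : ℝ)) *
            ∫ x in Ioi (0:ℝ), (1 + ρ * x) ^ (-s) * x ^ (m - 1) * Real.exp (-x)) /
          Real.log ρ)
      atTop (nhds (min s m)) ∧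
    Tendsto
      (fun ρ : ℝ =>
        -Real.log (((1 / (Nat.factorial (m - 1) : ℝ)) *
              ∫ x in Ioi (0:ℝ), (1 + ρ * x) ^ (-(η / τ)) * x ^ (m - 1) * Real.exp (-x)) ^ τ) /
          Real.log ρ)
      atTop (nhds (min η ((m : ℝ) * τ))) := by
  have hsimo {η τ : ℝ} (hη : 0 < η) (hτ : 0 < τ) :=
    simo_snr_exponent_general (a := m) (by positivity) one_pos hη hτ
  simp only [HasSNRExponent, bufferedDistortion_gammaMeasure_natCast_one hm] at hsimo
  exact ⟨by simpa only [div_one, rpow_one, mul_one] using hsimo hs one_pos, hsimo hη hτ⟩
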